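/- arXiv:1807.03536 — 4 statements merged into one kernel-verified Lean document; each statement's English description precedes it below -/
import Mathlib

section
/- Let Φ̊ be a root system in V and (Λ_α)_{α ∈ Φ̊ ∪ {0}} an extension datum of type (Φ̊, Y). Then for all α, β ∈ Φ̊ one has Λ_{s_β(α)} = Λ_α (hence Λ_{w(α)} = Λ_α for every w in the Weyl group W(Φ̊) generated by the reflections s_γ, γ ∈ Φ̊), and Λ_{−α} = Λ_α = −Λ_α. -/
open scoped RealInnerProductSpace Pointwise

noncomputable section

namespace BdS

variable {V Y : Type*} [NormedAddCommGroup V] [InnerProductSpace ℝ V]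
variable [AddCommGroup Y] [Module ℝ Y]

/-- `pairing β α = (β, α∨) = 2(β,α)/(α,α)`. -/
def pairing (β α : V) : ℝ := 2 * ⟪β, α⟫ / ⟪α, α⟫

/-- `reflRoot α v = s_α(v) = v − (v, α∨)α`. -/
def reflRoot (α v : V) : V := v - pairing v α • α

/-- A (finite) root system in `V`. -/
def IsRootSystem (Φ : Set V) : Prop :=
  Φ.Finite ∧ (0 : V) ∉ Φ ∧ Submodule.span ℝ Φ = ⊤ ∧
    (∀ α ∈ Φ, ∀ β ∈ Φ, reflRoot α β ∈ Φ) ∧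
    ∀ α ∈ Φ, ∀ β ∈ Φ, ∃ m : ℤ, pairing β α = (m : ℝ)

def IsReduced (Φ : Set V) : Prop :=
  ∀ α ∈ Φ, ∀ c : ℝ, c • α ∈ Φ → c • α = α ∨ c • α = -α

def IsIrreducible (Φ : Set V) : Prop :=
  ∀ Φ₁ Φ₂ : Set V, Φ = Φ₁ ∪ Φ₂ → (∀ x ∈ Φ₁, ∀ y ∈ Φ₂, ⟪x, y⟫ = 0) →
    Φ₁ = ∅ ∨ Φ₂ = ∅

/-- divisible roots -/
def divSet (Φ : Set V) : Set V := {α ∈ Φ | (2:ℝ)⁻¹ • α ∈ Φ}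
/-- non-divisible roots -/
def ndSet (Φ : Set V) : Set V := Φ \ divSet Φ
/-- short roots: non-divisible roots of non-maximal squared length -/
def shortSet (Φ : Set V) : Set V := {α ∈ ndSet Φ | ∃ β ∈ ndSet Φ, ⟪α, α⟫ < ⟪β, β⟫}
/-- long roots -/
def longSet (Φ : Set V) : Set V := ndSet Φ \ shortSet Φ

/-- An extension datum of type `(Φ, Y)`. -/
def IsExtensionDatum (Φ : Set V) (Λ : V → Set Y) : Prop :=
  (∀ α ∈ Φ, ∀ β ∈ Φ, ∀ z ∈ Λ α, ∀ y ∈ Λ β, y - pairing β α • z ∈ Λ (reflRoot α β)) ∧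
  (0 : Y) ∈ Λ 0 ∧
  (∀ α ∈ ndSet Φ, (0 : Y) ∈ Λ α) ∧
  (∀ α ∈ divSet Φ, (Λ α).Nonempty) ∧
  Submodule.span ℝ (⋃ α ∈ insert (0 : V) Φ, Λ α) = ⊤

/-- subroot system of a finite root system -/
def IsSubRS (Φ Δ : Set V) : Prop :=
  Δ.Nonempty ∧ Δ ⊆ Φ ∧ ∀ α ∈ Δ, ∀ β ∈ Δ, reflRoot α β ∈ Δ

def IsClosedSubRS (Φ Δ : Set V) : Prop :=
  IsSubRS Φ Δ ∧ ∀ α ∈ Δ, ∀ β ∈ Δ, α + β ∈ Φ → α + β ∈ Δ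

def IsMaxClosedSubRS (Φ Δ : Set V) : Prop :=
  IsClosedSubRS Φ Δ ∧ Δ ≠ Φ ∧
    ∀ Δ' : Set V, IsClosedSubRS Φ Δ' → Δ' ≠ Φ → Δ ⊆ Δ' → Δ' = Δ

/-- semi-closed subroot system, relative to given short/long/divisible parts -/
def IsSemiClosedSubRS (Φ Φs Φl Φd Δ : Set V) : Prop :=
  IsSubRS Φ Δ ∧ ¬ (∀ α ∈ Δ, ∀ β ∈ Δ, α + β ∈ Φ → α + β ∈ Δ) ∧
    ∀ α ∈ Δ, ∀ β ∈ Δ, α + β ∈ Φ → α + β ∉ Δ →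
      (α ∈ Φs ∧ β ∈ Φs ∧ α + β ∈ Φl ∪ Φd) ∨ (α ∈ Φl ∧ β ∈ Φl ∧ α + β ∈ Φd)

def IsMaxSemiClosedSubRS (Φ Φs Φl Φd Δ : Set V) : Prop :=
  IsSemiClosedSubRS Φ Φs Φl Φd Δ ∧
    ∀ Δ' : Set V, IsClosedSubRS Φ Δ' → Δ' ≠ Φ → ¬ Δ ⊂ Δ'

/-- the set of real roots attached to an extension datum -/
def PhiRe (Φ : Set V) (Λ : V → Set Y) : Set (V × Y) := {x | x.1 ∈ Φ ∧ x.2 ∈ Λ x.1}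

/-- affine reflection `s_{α ⊕ y}(β ⊕ z) = s_α(β) ⊕ (z − (β,α∨)y)` -/
def reflAff (a x : V × Y) : V × Y := (reflRoot a.1 x.1, x.2 - pairing x.1 a.1 • a.2)

/-- subroot system of a set of real roots `R` -/
def IsSubSys (R Ψ : Set (V × Y)) : Prop :=
  Ψ.Nonempty ∧ Ψ ⊆ R ∧ Ψ ≠ R ∧ ∀ a ∈ Ψ, ∀ x ∈ Ψ, reflAff a x ∈ Ψ

def IsClosedSubSys (R Ψ : Set (V × Y)) : Prop :=
  IsSubSys R Ψ ∧ ∀ x ∈ Ψ, ∀ y ∈ Ψ, x + y ∈ R → x + y ∈ Ψ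

def IsMaxClosedSubSys (R Ψ : Set (V × Y)) : Prop :=
  IsClosedSubSys R Ψ ∧ ∀ Ψ' : Set (V × Y), IsClosedSubSys R Ψ' → Ψ ⊆ Ψ' → Ψ' = Ψ

/-- gradient of a subroot system -/
def Gr (Ψ : Set (V × Y)) : Set V := {α | ∃ y : Y, (α, y) ∈ Ψ}

def Zset (Ψ : Set (V × Y)) (α : V) : Set Y := {y | (α, y) ∈ Ψ}

abbrev E (n : ℕ) := EuclideanSpace ℝ (Fin n)

def eps {n : ℕ} (i : Fin n) : E n := EuclideanSpace.single i 1

def shortBC (n : ℕ) : Set (E n) := {v | ∃ i : Fin n, v = eps i ∨ v = -eps i}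

def longBC (n : ℕ) : Set (E n) :=
  {v | ∃ i j : Fin n, i ≠ j ∧ ∃ c d : ℝ, (c = 1 ∨ c = -1) ∧ (d = 1 ∨ d = -1) ∧
    v = c • eps i + d • eps j}

def divBC (n : ℕ) : Set (E n) :=
  {v | ∃ i : Fin n, v = (2:ℝ) • eps i ∨ v = -((2:ℝ) • eps i)}

def BCn (n : ℕ) : Set (E n) := shortBC n ∪ longBC n ∪ divBC n
def Bn (n : ℕ) : Set (E n) := shortBC n ∪ longBC n
def Cn (n : ℕ) : Set (E n) := longBC n ∪ divBC n

theorem reflRoot_invol (β α : V) : reflRoot β (reflRoot β α) = α := by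
  by_cases h : β = 0
  · simp [reflRoot, h]
  have h' : ⟪β, β⟫ ≠ 0 := inner_self_ne_zero.mpr h
  have : pairing (reflRoot β α) β = - pairing α β := by
    unfold reflRoot
    generalize hc : pairing α β = c
    unfold pairing at *
    rw [inner_sub_left, real_inner_smul_left, ← hc]
    field_simp
    ring
  rw [reflRoot, this, reflRoot]
  simp

theorem pairing_smul_right (c : ℝ) (hc : c ≠ 0) (α β : V) :
    pairing α (c • β) = c⁻¹ * pairing α β := by
  unfold pairing
  rw [real_inner_smul_left, real_inner_smul_right, real_inner_smul_right]
  by_cases h : ⟪β, β⟫ = 0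
  · rw [h]; simp only [mul_zero, div_zero]
  field_simp

theorem pairing_smul_left (c : ℝ) (α β : V) :
    pairing (c • α) β = c * pairing α β := by
  unfold pairing
  rw [real_inner_smul_left]
  ring

theorem pairing_self (α : V) (h : α ≠ 0) : pairing α α = 2 := by
  have h' : ⟪α, α⟫ ≠ 0 := inner_self_ne_zero.mpr h
  unfold pairing
  field_simp

theorem reflRoot_smul (c : ℝ) (hc : c ≠ 0) (α β : V) :
    reflRoot (c • β) α = reflRoot β α := by
  unfold reflRoot
  rw [pairing_smul_right c hc, smul_smul]
  congr 2
  field_simp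

theorem reflRoot_self (α : V) (h : α ≠ 0) : reflRoot α α = -α := by
  rw [reflRoot, pairing_self α h, two_smul]
  abel

theorem half_nd (Φ : Set V) (hΦ : IsRootSystem Φ) (β : V) (hβ : β ∈ divSet Φ) :
    (2:ℝ)⁻¹ • β ∈ ndSet Φ := by
  refine ⟨hβ.2, fun h => ?_⟩
  have hb0 : β ≠ 0 := fun h0 => hΦ.2.1 (h0 ▸ hβ.1)
  obtain ⟨m, hm⟩ := hΦ.2.2.2.2 β hβ.1 _ h.2
  rw [pairing_smul_left, pairing_smul_left, pairing_self β hb0] at hm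
  have h2 : (2 * m : ℝ) = 1 := by rw [← hm]; norm_num
  have h3 : 2 * m = 1 := by exact_mod_cast h2
  omega

theorem refl_eq (Φ : Set V) (Λ : V → Set Y) (hΦ : IsRootSystem Φ)
    (hΛ : IsExtensionDatum Φ Λ) (α : V) (hα : α ∈ Φ) (β : V) (hβ : β ∈ Φ) :
    Λ (reflRoot β α) = Λ α := by
  have key : ∀ γ ∈ ndSet Φ, ∀ δ ∈ Φ, Λ δ ⊆ Λ (reflRoot γ δ) := by
    intro γ hγ δ hδ y hy
    simpa using hΛ.1 γ hγ.1 δ hδ 0 (hΛ.2.2.1 γ hγ) y hy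
  have key2 : ∀ γ ∈ ndSet Φ, Λ (reflRoot γ α) = Λ α := by
    intro γ hγ
    apply Set.Subset.antisymm
    · have := key γ hγ _ (hΦ.2.2.2.1 γ hγ.1 α hα)
      rwa [reflRoot_invol] at this
    · exact key γ hγ α hα
  by_cases hd : β ∈ divSet Φ
  · rw [← reflRoot_smul (2:ℝ)⁻¹ (by norm_num)]
    exact key2 _ (half_nd Φ hΦ β hd)
  · exact key2 β ⟨hβ, hd⟩

/-- Proposition 2.8: Weyl-group invariance and symmetry of an extension datum. -/
theorem statement1 {V Y : Type*} [NormedAddCommGroup V] [InnerProductSpace ℝ V]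
    [AddCommGroup Y] [Module ℝ Y] [FiniteDimensional ℝ V] [FiniteDimensional ℝ Y]
    (Φ : Set V) (Λ : V → Set Y) (hΦ : IsRootSystem Φ) (hΛ : IsExtensionDatum Φ Λ) :
    (∀ α ∈ Φ, ∀ β ∈ Φ, Λ (reflRoot β α) = Λ α) ∧
    (∀ α ∈ Φ, ∀ l : List V, (∀ γ ∈ l, γ ∈ Φ) → Λ (l.foldr reflRoot α) = Λ α) ∧
    (∀ α ∈ Φ, Λ (-α) = Λ α ∧ Λ α = -Λ α) := by
  have h1 := refl_eq Φ Λ hΦ hΛ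
  refine ⟨h1, ?_, ?_⟩
  · intro α hα l hl
    have : l.foldr reflRoot α ∈ Φ ∧ Λ (l.foldr reflRoot α) = Λ α := by
      induction l with
      | nil => exact ⟨hα, rfl⟩
      | cons a l ih =>
        obtain ⟨i1, i2⟩ := ih (fun γ hγ => hl γ (List.mem_cons_of_mem _ hγ))
        have ha : a ∈ Φ := hl a List.mem_cons_self
        exact ⟨hΦ.2.2.2.1 a ha _ i1, (h1 _ i1 a ha).trans i2⟩
    exact this.2
  · intro α hα
    have h0 : α ≠ 0 := fun h0 => hΦ.2.1 (h0 ▸ hα)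
    have hn : Λ (-α) = Λ α := by
      rw [← reflRoot_self α h0]
      exact h1 α hα α hα
    have hneg : ∀ y ∈ Λ α, -y ∈ Λ α := by
      intro y hy
      have := hΛ.1 α hα α hα y hy y hy
      rw [pairing_self α h0, reflRoot_self α h0, hn, two_smul] at this
      simpa using this
    refine ⟨hn, ?_⟩
    ext y
    rw [Set.mem_neg]
    exact ⟨hneg y, fun h => by simpa using hneg _ h⟩

end BdS
end
end

section
/- Let Φ̊ ⊂ ℝⁿ be the root system of type C_n with n ≥ 3 and let (Λ_α) be an extension datum of type (Φ̊, Y), with common values Λ_s on short roots and Λ_ℓ on long roots. Then Λ_s is an additive subgroup of Y, and Λ_ℓ + 2Λ_s ⊆ Λ_ℓ and Λ_s + Λ_ℓ ⊆ Λ_s; moreover Λ_ℓ + 2Λ_ℓ = Λ_ℓ. -/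
open scoped RealInnerProductSpace Pointwise

noncomputable section

namespace BdS

variable {V Y : Type*} [NormedAddCommGroup V] [InnerProductSpace ℝ V]
variable [AddCommGroup Y] [Module ℝ Y]

theorem inner_eps {n : ℕ} (i j : Fin n) : ⟪(eps i : E n), eps j⟫ = if i = j then (1:ℝ) else 0 := by
  simp [eps, EuclideanSpace.inner_single_left]

theorem Cn_inner {n : ℕ} {v : E n} (hv : v ∈ Cn n) : ⟪v, v⟫ = (2:ℝ) ∨ ⟪v, v⟫ = (4:ℝ) := by
  rcases hv with ⟨i, j, hij, c, d, hc, hd, rfl⟩ | ⟨i, rfl | rfl⟩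
  · left
    simp only [inner_add_left, inner_add_right, real_inner_smul_left, real_inner_smul_right,
      inner_eps, hij, hij.symm, if_true, if_false]
    rcases hc with rfl | rfl <;> rcases hd with rfl | rfl <;> norm_num
  · right
    simp only [real_inner_smul_left, real_inner_smul_right, inner_eps, if_true]
    norm_num
  · right
    simp only [inner_neg_left, inner_neg_right, real_inner_smul_left, real_inner_smul_right,
      inner_eps, if_true]
    norm_num

theorem Cn_nd {n : ℕ} {v : E n} (hv : v ∈ Cn n) : v ∈ ndSet (Cn n) := by
  refine ⟨hv, fun h => ?_⟩
  have h1 := Cn_inner hv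
  have h2 := Cn_inner h.2
  rw [real_inner_smul_left, real_inner_smul_right] at h2
  rcases h1 with h1 | h1 <;> rw [h1] at h2 <;> norm_num at h2

/-- Lemma 2.10(ii) for type `C_n`, `n ≥ 3`. -/
theorem statement2 {Y : Type*} [AddCommGroup Y] [Module ℝ Y] [FiniteDimensional ℝ Y]
    {n : ℕ} (hn : 3 ≤ n) (Λ : E n → Set Y) (Λs Λl : Set Y)
    (hED : IsExtensionDatum (Cn n) Λ)
    (hs : ∀ α ∈ longBC n, Λ α = Λs) (hl : ∀ α ∈ divBC n, Λ α = Λl) :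
    (∃ G : AddSubgroup Y, Λs = (G : Set Y)) ∧
    (∀ a ∈ Λl, ∀ b ∈ Λs, a + b + b ∈ Λl) ∧
    (∀ a ∈ Λs, ∀ b ∈ Λl, a + b ∈ Λs) ∧
    {x : Y | ∃ a ∈ Λl, ∃ b ∈ Λl, x = a + b + b} = Λl := by
  obtain ⟨h1, -, h0, -, -⟩ := hED
  let i : Fin n := ⟨0, by omega⟩
  let j : Fin n := ⟨1, by omega⟩
  let k : Fin n := ⟨2, by omega⟩
  have hij : i ≠ j := by simp [i, j]
  have hik : i ≠ k := by simp [i, k]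
  have hjk : j ≠ k := by simp [j, k]
  clear_value i j k
  have mp : ∀ {a b : Fin n}, a ≠ b → (eps a + eps b : E n) ∈ longBC n := fun {a b} h =>
    ⟨a, b, h, 1, 1, Or.inl rfl, Or.inl rfl, by simp⟩
  have mm : ∀ {a b : Fin n}, a ≠ b → (eps a - eps b : E n) ∈ longBC n := fun {a b} h =>
    ⟨a, b, h, 1, -1, Or.inl rfl, Or.inr rfl, by simp [sub_eq_add_neg]⟩
  have dp : ∀ a : Fin n, ((2:ℝ) • eps a : E n) ∈ divBC n := fun a => ⟨a, Or.inl rfl⟩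
  have dm : ∀ a : Fin n, (-((2:ℝ) • eps a) : E n) ∈ divBC n := fun a => ⟨a, Or.inr rfl⟩
  have s0 : (0:Y) ∈ Λs := by
    rw [← hs _ (mp hij)]; exact h0 _ (Cn_nd (Or.inl (mp hij)))
  have l0 : (0:Y) ∈ Λl := by
    rw [← hl _ (dp i)]; exact h0 _ (Cn_nd (Or.inr (dp i)))
  have ss : ∀ y ∈ Λs, ∀ z ∈ Λs, y - z ∈ Λs := by
    intro y hy z hz
    have pr : pairing (eps i + eps j : E n) (eps j + eps k) = 1 := by
      simp only [pairing, inner_add_left, inner_add_right, inner_eps, hij, hik, hjk, hjk.symm,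
        if_true, if_false]
      norm_num
    have rf : reflRoot (eps j + eps k : E n) (eps i + eps j) = eps i - eps k := by
      rw [reflRoot, pr]; module
    have := h1 _ (Or.inl (mp hjk)) _ (Or.inl (mp hij)) z (by rwa [hs _ (mp hjk)]) y
      (by rwa [hs _ (mp hij)])
    rwa [rf, pr, one_smul, hs _ (mm hik)] at this
  have ls : ∀ y ∈ Λl, ∀ z ∈ Λs, y - (2:ℝ) • z ∈ Λl := by
    intro y hy z hz
    have pr : pairing ((2:ℝ) • eps i : E n) (eps i + eps j) = 2 := by
      simp only [pairing, inner_add_left, inner_add_right, real_inner_smul_left, inner_eps, hij,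
        hij.symm, if_true, if_false]
      norm_num
    have rf : reflRoot (eps i + eps j : E n) ((2:ℝ) • eps i) = -((2:ℝ) • eps j) := by
      rw [reflRoot, pr]; module
    have := h1 _ (Or.inl (mp hij)) _ (Or.inr (dp i)) z (by rwa [hs _ (mp hij)]) y
      (by rwa [hl _ (dp i)])
    rwa [rf, pr, hl _ (dm j)] at this
  have sl : ∀ y ∈ Λs, ∀ z ∈ Λl, y - z ∈ Λs := by
    intro y hy z hz
    have pr : pairing (eps i + eps j : E n) ((2:ℝ) • eps j) = 1 := by
      simp only [pairing, inner_add_left, real_inner_smul_left, real_inner_smul_right, inner_eps,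
        hij, if_true, if_false]
      norm_num
    have rf : reflRoot ((2:ℝ) • eps j : E n) (eps i + eps j) = eps i - eps j := by
      rw [reflRoot, pr]; module
    have := h1 _ (Or.inr (dp j)) _ (Or.inl (mp hij)) z (by rwa [hl _ (dp j)]) y
      (by rwa [hs _ (mp hij)])
    rwa [rf, pr, one_smul, hs _ (mm hij)] at this
  have ns : ∀ z ∈ Λs, -z ∈ Λs := fun z hz => by simpa using ss 0 s0 z hz
  have lsub : ∀ z ∈ Λl, z ∈ Λs := fun z hz => by
    have := ns _ (sl 0 s0 z hz)
    rwa [zero_sub, neg_neg] at this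
  have c2 : ∀ a ∈ Λl, ∀ b ∈ Λs, a + b + b ∈ Λl := fun a ha b hb => by
    have := ls a ha (-b) (ns b hb)
    have e : a - (2:ℝ) • (-b) = a + b + b := by module
    rwa [e] at this
  have as : ∀ y ∈ Λs, ∀ z ∈ Λs, y + z ∈ Λs := fun y hy z hz => by
    simpa using ss y hy (-z) (ns z hz)
  refine ⟨⟨{ carrier := Λs, add_mem' := fun {a b} ha hb => as a ha b hb, zero_mem' := s0,
             neg_mem' := fun {a} ha => ns a ha }, rfl⟩, c2,
    fun a ha b hb => as a ha b (lsub b hb), ?_⟩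
  ext x
  constructor
  · rintro ⟨a, ha, b, hb, rfl⟩
    exact c2 a ha b (lsub b hb)
  · intro hx
    exact ⟨x, hx, 0, l0, by simp⟩

end BdS
end
end

section
/- Let Φ̊ ⊂ ℝⁿ be the root system of type BC_n with n ≥ 3 and let (Λ_α) be an extension datum of type (Φ̊, Y), with common values Λ_s, Λ_ℓ, Λ_d on short, long, divisible roots respectively. Then Λ_ℓ is an additive subgroup of Y, and the following inclusions hold: Λ_ℓ + 2Λ_s ⊆ Λ_ℓ, Λ_s + Λ_ℓ ⊆ Λ_s, Λ_d + 2Λ_ℓ ⊆ Λ_d, Λ_ℓ + Λ_d ⊆ Λ_ℓ, Λ_d + 4Λ_s ⊆ Λ_d, Λ_s + Λ_d ⊆ Λ_s; moreover Λ_d + 2Λ_d = Λ_d. -/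
open scoped RealInnerProductSpace Pointwise

noncomputable section

namespace BdS

variable {V Y : Type*} [NormedAddCommGroup V] [InnerProductSpace ℝ V]
variable [AddCommGroup Y] [Module ℝ Y]

/-- Lemma 2.10(iv) for type `BC_n`, `n ≥ 3`. -/
theorem statement3 {Y : Type*} [AddCommGroup Y] [Module ℝ Y] [FiniteDimensional ℝ Y]
    {n : ℕ} (hn : 3 ≤ n) (Λ : E n → Set Y) (Λs Λl Λd : Set Y)
    (hED : IsExtensionDatum (BCn n) Λ)
    (hs : ∀ α ∈ shortBC n, Λ α = Λs) (hl : ∀ α ∈ longBC n, Λ α = Λl)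
    (hd : ∀ α ∈ divBC n, Λ α = Λd) :
    (∃ G : AddSubgroup Y, Λl = (G : Set Y)) ∧
    (∀ a ∈ Λl, ∀ b ∈ Λs, a + b + b ∈ Λl) ∧
    (∀ a ∈ Λs, ∀ b ∈ Λl, a + b ∈ Λs) ∧
    (∀ a ∈ Λd, ∀ b ∈ Λl, a + b + b ∈ Λd) ∧
    (∀ a ∈ Λl, ∀ b ∈ Λd, a + b ∈ Λl) ∧
    (∀ a ∈ Λd, ∀ b ∈ Λs, a + b + b + b + b ∈ Λd) ∧
    (∀ a ∈ Λs, ∀ b ∈ Λd, a + b ∈ Λs) ∧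
    {x : Y | ∃ a ∈ Λd, ∃ b ∈ Λd, x = a + b + b} = Λd := by
  obtain ⟨h1, -, h0, hne, -⟩ := hED
  have key : ∀ α ∈ BCn n, ∀ β ∈ BCn n, ∀ p : ℝ, ∀ γ : E n, pairing β α = p → β - p • α = γ →
      ∀ z ∈ Λ α, ∀ y ∈ Λ β, y - p • z ∈ Λ γ := by
    intro α hα β hβ p γ hp hγ z hz y hy
    have := h1 α hα β hβ z hz y hy
    rw [reflRoot, hp, hγ] at this
    exact this
  let i0 : Fin n := ⟨0, by omega⟩
  let i1 : Fin n := ⟨1, by omega⟩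
  let i2 : Fin n := ⟨2, by omega⟩
  have n01 : i0 ≠ i1 := by simp [i0, i1]
  have n02 : i0 ≠ i2 := by simp [i0, i2]
  have n12 : i1 ≠ i2 := by simp [i1, i2]
  clear_value i0 i1 i2
  have n10 := n01.symm
  have n20 := n02.symm
  have n21 := n12.symm
  have sS : shortBC n ⊆ BCn n := fun x hx => Or.inl (Or.inl hx)
  have lS : longBC n ⊆ BCn n := fun x hx => Or.inl (Or.inr hx)
  have dS : divBC n ⊆ BCn n := fun x hx => Or.inr hx
  have ms : ∀ i, eps i ∈ shortBC n := fun i => ⟨i, Or.inl rfl⟩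
  have ms' : ∀ i, -eps i ∈ shortBC n := fun i => ⟨i, Or.inr rfl⟩
  have md : ∀ i, (2:ℝ) • eps i ∈ divBC n := fun i => ⟨i, Or.inl rfl⟩
  have md' : ∀ i, -((2:ℝ) • eps i) ∈ divBC n := fun i => ⟨i, Or.inr rfl⟩
  have mp : ∀ i j, i ≠ j → eps i + eps j ∈ longBC n := fun i j h =>
    ⟨i, j, h, 1, 1, Or.inl rfl, Or.inl rfl, by simp⟩
  have mm : ∀ i j, i ≠ j → eps i - eps j ∈ longBC n := fun i j h =>
    ⟨i, j, h, 1, -1, Or.inl rfl, Or.inr rfl, by simp [sub_eq_add_neg]⟩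
  have zl : (0 : Y) ∈ Λl := by
    rw [← hl _ (mm i0 i1 n01)]
    refine h0 _ ⟨lS (mm i0 i1 n01), ?_⟩
    rintro ⟨-, hh⟩
    have c0 : ((2:ℝ)⁻¹ • (eps i0 - eps i1 : E n)) i0 = 1/2 := by
      simp [eps, n01]
    have cc : ∀ v ∈ BCn n, ∀ k, ∃ m : ℤ, v k = m := by
      have e : ∀ i k : Fin n, ∃ m : ℤ, (eps i : E n) k = m := by
        intro i k
        by_cases h : k = i
        · exact ⟨1, by simp [eps, h]⟩
        · exact ⟨0, by simp [eps, h]⟩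
      rintro v ((⟨i, rfl | rfl⟩ | ⟨i, j, -, c, d, hc, hd, rfl⟩) | ⟨i, rfl | rfl⟩) k
      · exact e i k
      · obtain ⟨m, hm⟩ := e i k
        exact ⟨-m, by simp [hm]⟩
      · obtain ⟨m, hm⟩ := e i k
        obtain ⟨m', hm'⟩ := e j k
        rcases hc with rfl | rfl <;> rcases hd with rfl | rfl
        · exact ⟨m + m', by simp [hm, hm']⟩
        · exact ⟨m + -m', by simp [hm, hm']⟩
        · exact ⟨-m + m', by simp [hm, hm']⟩
        · exact ⟨-m + -m', by simp [hm, hm']⟩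
      · obtain ⟨m, hm⟩ := e i k
        exact ⟨2 * m, by simp [hm]⟩
      · obtain ⟨m, hm⟩ := e i k
        exact ⟨-(2 * m), by simp [hm]⟩
    obtain ⟨m, hm⟩ := cc _ hh i0
    rw [c0] at hm
    have : (1:ℝ) = 2 * m := by linarith
    have : (1:ℤ) = 2 * m := by exact_mod_cast this
    omega
  have addl : ∀ a ∈ Λl, ∀ b ∈ Λl, a + b ∈ Λl := by
    intro a ha b hb
    have := key _ (lS (mm i1 i2 n12)) _ (lS (mm i0 i1 n01)) (-1) (eps i0 - eps i2)
      (by simp only [pairing, inner_sub_left, inner_sub_right, inner_neg_left, real_inner_smul_left, real_inner_smul_right, inner_eps, n01, n02, n12, n10, n20, n21, if_true, if_false]; norm_num) (by module)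
      b (by rwa [hl _ (mm _ _ n12)]) a (by rwa [hl _ (mm _ _ n01)])
    rw [hl _ (mm _ _ n02)] at this
    convert this using 1; module
  have negl : ∀ a ∈ Λl, -a ∈ Λl := by
    intro a ha
    have := key _ (lS (mm i0 i1 n01)) _ (lS (mm i0 i1 n01)) 2 (eps i1 - eps i0)
      (by simp only [pairing, inner_sub_left, inner_sub_right, inner_neg_left, real_inner_smul_left, real_inner_smul_right, inner_eps, n01, n02, n12, n10, n20, n21, if_true, if_false]; norm_num) (by module)
      a (by rwa [hl _ (mm _ _ n01)]) a (by rwa [hl _ (mm _ _ n01)])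
    rw [hl _ (mm _ _ n10)] at this
    convert this using 1; module
  have negd : ∀ a ∈ Λd, -a ∈ Λd := by
    intro a ha
    have := key _ (dS (md i0)) _ (dS (md i0)) 2 (-((2:ℝ) • eps i0))
      (by simp only [pairing, inner_sub_left, inner_sub_right, inner_neg_left, real_inner_smul_left, real_inner_smul_right, inner_eps, n01, n02, n12, n10, n20, n21, if_true, if_false]; norm_num) (by module)
      a (by rwa [hd _ (md _)]) a (by rwa [hd _ (md _)])
    rw [hd _ (md' _)] at this
    convert this using 1; module
  refine ⟨⟨⟨⟨⟨Λl, fun {a b} ha hb => addl a ha b hb⟩, zl⟩, fun {a} ha => negl a ha⟩, rfl⟩, ?_, ?_, ?_, ?_, ?_, ?_, ?_⟩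
  · intro a ha b hb
    have := key _ (sS (ms i1)) _ (lS (mm i0 i1 n01)) (-2) (eps i0 + eps i1)
      (by simp only [pairing, inner_sub_left, inner_sub_right, inner_neg_left, real_inner_smul_left, real_inner_smul_right, inner_eps, n01, n02, n12, n10, n20, n21, if_true, if_false]; norm_num) (by module)
      b (by rwa [hs _ (ms i1)]) a (by rwa [hl _ (mm i0 i1 n01)])
    rw [hl _ (mp i0 i1 n01)] at this
    convert this using 1; module
  · intro a ha b hb
    have := key _ (lS (mm i1 i0 n10)) _ (sS (ms i0)) (-1) (eps i1)
      (by simp only [pairing, inner_sub_left, inner_sub_right, inner_neg_left, real_inner_smul_left, real_inner_smul_right, inner_eps, n01, n02, n12, n10, n20, n21, if_true, if_false]; norm_num) (by module)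
      b (by rwa [hl _ (mm i1 i0 n10)]) a (by rwa [hs _ (ms i0)])
    rw [hs _ (ms i1)] at this
    convert this using 1; module
  · intro a ha b hb
    have := key _ (lS (mm i1 i0 n10)) _ (dS (md i0)) (-2) ((2:ℝ) • eps i1)
      (by simp only [pairing, inner_sub_left, inner_sub_right, inner_neg_left, real_inner_smul_left, real_inner_smul_right, inner_eps, n01, n02, n12, n10, n20, n21, if_true, if_false]; norm_num) (by module)
      b (by rwa [hl _ (mm i1 i0 n10)]) a (by rwa [hd _ (md i0)])
    rw [hd _ (md i1)] at this
    convert this using 1; module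
  · intro a ha b hb
    have := key _ (dS (md i1)) _ (lS (mm i0 i1 n01)) (-1) (eps i0 + eps i1)
      (by simp only [pairing, inner_sub_left, inner_sub_right, inner_neg_left, real_inner_smul_left, real_inner_smul_right, inner_eps, n01, n02, n12, n10, n20, n21, if_true, if_false]; norm_num) (by module)
      b (by rwa [hd _ (md i1)]) a (by rwa [hl _ (mm i0 i1 n01)])
    rw [hl _ (mp i0 i1 n01)] at this
    convert this using 1; module
  · intro a ha b hb
    have := key _ (sS (ms i0)) _ (dS (md' i0)) (-4) ((2:ℝ) • eps i0)
      (by simp only [pairing, inner_sub_left, inner_sub_right, inner_neg_left, real_inner_smul_left, real_inner_smul_right, inner_eps, n01, n02, n12, n10, n20, n21, if_true, if_false]; norm_num) (by module)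
      b (by rwa [hs _ (ms i0)]) a (by rwa [hd _ (md' i0)])
    rw [hd _ (md i0)] at this
    convert this using 1; module
  · intro a ha b hb
    have := key _ (dS (md i0)) _ (sS (ms' i0)) (-1) (eps i0)
      (by simp only [pairing, inner_sub_left, inner_sub_right, inner_neg_left, real_inner_smul_left, real_inner_smul_right, inner_eps, n01, n02, n12, n10, n20, n21, if_true, if_false]; norm_num) (by module)
      b (by rwa [hd _ (md i0)]) a (by rwa [hs _ (ms' i0)])
    rw [hs _ (ms i0)] at this
    convert this using 1; module
  · ext x
    constructor
    · rintro ⟨a, ha, b, hb, rfl⟩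
      have := key _ (dS (md i0)) _ (dS (md' i0)) (-2) ((2:ℝ) • eps i0)
        (by simp only [pairing, inner_sub_left, inner_sub_right, inner_neg_left, real_inner_smul_left, real_inner_smul_right, inner_eps, n01, n02, n12, n10, n20, n21, if_true, if_false]; norm_num) (by module)
        b (by rwa [hd _ (md i0)]) a (by rwa [hd _ (md' i0)])
      rw [hd _ (md i0)] at this
      convert this using 1; module
    · intro hx
      exact ⟨-x, negd x hx, x, hx, by abel⟩

end BdS
end
end

section
/- Let Φ̊ be a reduced irreducible root system in V in which exactly two root lengths occur, with Φ̊_s the roots of minimal squared length and Φ̊_ℓ = Φ̊ ∖ Φ̊_s, and let Φ̊' be a maximal semi-closed subroot system of Φ̊. Then the set Φ̊' ∪ {γ ∈ Φ̊_ℓ : γ = α + β for some α, β ∈ Φ̊' ∩ Φ̊_s} is the smallest closed subroot system of Φ̊ containing Φ̊'. In particular, Φ̊_s ⊆ Φ̊'. -/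
open scoped RealInnerProductSpace Pointwise

noncomputable section

namespace BdS

variable {V Y : Type*} [NormedAddCommGroup V] [InnerProductSpace ℝ V]
variable [AddCommGroup Y] [Module ℝ Y]

/-- Two elements with negative inner product: the sum is zero or again in the system. -/
theorem add_mem_of_inner_neg {V : Type*} [NormedAddCommGroup V] [InnerProductSpace ℝ V]
    (D : Set V) (h0 : (0 : V) ∉ D)
    (hr : ∀ α ∈ D, ∀ β ∈ D, reflRoot α β ∈ D)
    (hi : ∀ α ∈ D, ∀ β ∈ D, ∃ m : ℤ, pairing β α = (m : ℝ))
    (x y : V) (hx : x ∈ D) (hy : y ∈ D) (hneg : ⟪x, y⟫ < 0) :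
    x + y = 0 ∨ x + y ∈ D := by
  have px : 0 < ⟪x, x⟫ := real_inner_self_pos.2 (fun h => h0 (h ▸ hx))
  have py : 0 < ⟪y, y⟫ := real_inner_self_pos.2 (fun h => h0 (h ▸ hy))
  obtain ⟨m, hm⟩ := hi y hy x hx
  obtain ⟨n, hn⟩ := hi x hx y hy
  have r1 := hr y hy x hx
  have r2 := hr x hx y hy
  unfold reflRoot at r1 r2
  rw [hm] at r1
  rw [hn] at r2
  unfold pairing at hm hn
  rw [real_inner_comm] at hn
  rw [div_eq_iff py.ne'] at hm
  rw [div_eq_iff px.ne'] at hn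
  have m0 : m < 0 := by
    by_contra h
    have : (0:ℝ) ≤ m := by exact_mod_cast not_lt.1 h
    nlinarith
  have n0 : n < 0 := by
    by_contra h
    have : (0:ℝ) ≤ n := by exact_mod_cast not_lt.1 h
    nlinarith
  by_cases m1 : m = -1
  · right; subst m1; simpa using r1
  by_cases n1 : n = -1
  · right; subst n1; simpa [add_comm] using r2
  left
  have m2 : (m:ℝ) ≤ -2 := by exact_mod_cast (by omega : m ≤ -2)
  have n2 : (n:ℝ) ≤ -2 := by exact_mod_cast (by omega : n ≤ -2)
  rw [← real_inner_self_nonpos, real_inner_add_add_self]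
  nlinarith

theorem refl_self_neg {V : Type*} [NormedAddCommGroup V] [InnerProductSpace ℝ V]
    (x : V) (hx : x ≠ 0) : reflRoot x x = -x := by
  have px : 0 < ⟪x, x⟫ := real_inner_self_pos.2 hx
  unfold reflRoot pairing
  rw [mul_div_assoc, div_self px.ne', mul_one, two_smul]
  abel

theorem exists_inner_pos {V : Type*} [NormedAddCommGroup V] [InnerProductSpace ℝ V]
    (g : V) (l : List V) (h : 0 < ⟪g, l.sum⟫) : ∃ x ∈ l, 0 < ⟪g, x⟫ := by
  induction l with
  | nil => simp at h
  | cons y l ih =>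
    rw [List.sum_cons, inner_add_right] at h
    by_cases hy : 0 < ⟪g, y⟫
    · exact ⟨y, by simp, hy⟩
    · obtain ⟨x, hx, hp⟩ := ih (by linarith)
      exact ⟨x, by simp [hx], hp⟩

/-- Lemma 3.9: the closed subroot system generated by a maximal semi-closed
subroot system, and `Φ̊_s ⊆ Φ̊'`. -/
theorem statement7 {V : Type*} [NormedAddCommGroup V] [InnerProductSpace ℝ V]
    [FiniteDimensional ℝ V]
    (Φ : Set V) (hΦ : IsRootSystem Φ) (hred : IsReduced Φ) (hirr : IsIrreducible Φ)
    (a b : ℝ) (hab : a < b)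
    (hlen : ∀ α ∈ Φ, ⟪α, α⟫ = a ∨ ⟪α, α⟫ = b)
    (ha : ∃ α ∈ Φ, ⟪α, α⟫ = a) (hb : ∃ β ∈ Φ, ⟪β, β⟫ = b)
    (Φs Φl : Set V) (hΦs : Φs = {α ∈ Φ | ⟪α, α⟫ = a}) (hΦl : Φl = Φ \ Φs)
    (Δ : Set V) (hΔ : IsMaxSemiClosedSubRS Φ Φs Φl ∅ Δ) :
    (IsClosedSubRS Φ (Δ ∪ {γ ∈ Φl | ∃ α ∈ Δ ∩ Φs, ∃ β ∈ Δ ∩ Φs, γ = α + β}) ∧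
      ∀ C : Set V, IsClosedSubRS Φ C → Δ ⊆ C →
        Δ ∪ {γ ∈ Φl | ∃ α ∈ Δ ∩ Φs, ∃ β ∈ Δ ∩ Φs, γ = α + β} ⊆ C) ∧
    Φs ⊆ Δ := by
  obtain ⟨-, h0, -, hr, hi⟩ := hΦ
  obtain ⟨⟨⟨hne, hsub, hrΔ⟩, hnc, hsc⟩, hmax⟩ := hΔ
  have h0Δ : (0 : V) ∉ Δ := fun h => h0 (hsub h)
  have hiΔ : ∀ α ∈ Δ, ∀ β ∈ Δ, ∃ m : ℤ, pairing β α = (m : ℝ) :=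
    fun α hα β hβ => hi α (hsub hα) β (hsub hβ)
  have negΔ : ∀ x ∈ Δ, -x ∈ Δ := fun x hx => by
    rw [← refl_self_neg x (fun h => h0Δ (h ▸ hx))]; exact hrΔ x hx x hx
  set Ψ : Set V := Δ ∪ {γ ∈ Φl | ∃ α ∈ Δ ∩ Φs, ∃ β ∈ Δ ∩ Φs, γ = α + β} with hΨ
  have hlΦ : Φl ⊆ Φ := by rw [hΦl]; exact Set.sdiff_subset
  have hΨΦ : Ψ ⊆ Φ := by
    rintro x (hx | ⟨hx, -⟩)
    · exact hsub hx
    · exact hlΦ hx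
  have hlb : ∀ x ∈ Φl, ⟪x, x⟫ = b := by
    intro x hx
    rw [hΦl, hΦs] at hx
    rcases hlen x hx.1 with h | h
    · exact absurd ⟨hx.1, h⟩ hx.2
    · exact h
  have step1 : ∀ x ∈ Δ, ∀ y ∈ Δ, x + y ∈ Φ → x + y ∈ Ψ := by
    intro x hx y hy hxy
    by_cases h : x + y ∈ Δ
    · exact Or.inl h
    · rcases hsc x hx y hy hxy h with ⟨h1, h2, h3⟩ | ⟨_, _, h3⟩
      · refine Or.inr ⟨by simpa using h3, x, ⟨hx, h1⟩, y, ⟨hy, h2⟩, rfl⟩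
      · exact absurd h3 (Set.notMem_empty _)
  have step3 : ∀ x ∈ Δ, ∀ α ∈ Δ, ∀ β ∈ Δ, ⟪x, α⟫ < 0 → x + (α + β) ∈ Φ →
      x + (α + β) ∈ Ψ := by
    intro x hx α hα β hβ hneg hΦ'
    rw [← add_assoc] at hΦ' ⊢
    rcases add_mem_of_inner_neg Δ h0Δ hrΔ hiΔ x α hx hα hneg with h | h
    · rw [h, zero_add]; exact Or.inl hβ
    · exact step1 _ h _ hβ hΦ'
  have pos : ∀ x ∈ Φ, 0 < ⟪x, x⟫ := fun x hx => real_inner_self_pos.2 (fun h => h0 (h ▸ hx))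
  have step2 : ∀ x ∈ Δ, ∀ y ∈ Ψ, x + y ∈ Φ → x + y ∈ Ψ := by
    rintro x hx y (hy | ⟨hyl, α, ⟨hα, -⟩, β, ⟨hβ, -⟩, rfl⟩) hxy
    · exact step1 x hx y hy hxy
    by_cases h1 : ⟪x, α⟫ < 0
    · exact step3 x hx α hα β hβ h1 hxy
    by_cases h2 : ⟪x, β⟫ < 0
    · rw [add_comm α β] at hxy ⊢
      exact step3 x hx β hβ α hα h2 hxy
    exfalso
    have e1 := real_inner_add_add_self x (α + β)
    rw [inner_add_right x α β] at e1
    have e2 := hlb _ hyl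
    have e3 := pos x (hsub hx)
    rcases hlen _ hxy with h | h <;> linarith
  have key : ∀ n : ℕ, ∀ l : List V, l.length = n → (∀ x ∈ l, x ∈ Δ) → l.sum ∈ Φ →
      l.sum ∈ Ψ := by
    intro n
    induction n with
    | zero =>
      intro l hl _ hs
      rw [List.length_eq_zero_iff.1 hl] at hs
      exact absurd hs h0
    | succ n ih =>
      classical
      intro l hl hlΔ hs
      obtain ⟨x, hxl, hx⟩ := exists_inner_pos l.sum l (pos _ hs)
      have hxΔ := hlΔ x hxl
      have hse : x + (l.erase x).sum = l.sum := List.sum_erase hxl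
      have hsub' : (l.erase x).sum = l.sum + -x := by rw [← hse]; abel
      rcases add_mem_of_inner_neg Φ h0 hr hi l.sum (-x) hs (hsub (negΔ x hxΔ))
        (by rw [inner_neg_right]; linarith) with h | h
      · rw [← hsub'] at h
        rw [← hse, h, add_zero]; exact Or.inl hxΔ
      · rw [← hsub'] at h
        have := ih (l.erase x) (by rw [List.length_erase_of_mem hxl, hl]; rfl)
          (fun z hz => hlΔ z (List.mem_of_mem_erase hz)) h
        rw [← hse] at hs ⊢
        exact step2 x hxΔ _ this hs
  have key2 : ∀ g ∈ AddSubgroup.closure Δ, g ∈ Φ → g ∈ Ψ := by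
    intro g hg hgΦ
    rw [← AddSubgroup.mem_toAddSubmonoid, AddSubgroup.closure_toAddSubmonoid] at hg
    obtain ⟨l, hl, rfl⟩ := AddSubmonoid.exists_list_of_mem_closure hg
    refine key _ l rfl (fun x hx => ?_) hgΦ
    rcases hl x hx with h | h
    · exact h
    · simpa using negΔ _ h
  have hΨcl : ∀ x ∈ Ψ, x ∈ AddSubgroup.closure Δ := by
    rintro x (hx | ⟨-, α, ⟨hα, -⟩, β, ⟨hβ, -⟩, rfl⟩)
    · exact AddSubgroup.subset_closure hx
    · exact add_mem (AddSubgroup.subset_closure hα) (AddSubgroup.subset_closure hβ)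
  have hcl : IsClosedSubRS Φ Ψ := by
    refine ⟨⟨hne.mono Set.subset_union_left, hΨΦ, ?_⟩, ?_⟩
    · intro α hα β hβ
      refine key2 _ ?_ (hr α (hΨΦ hα) β (hΨΦ hβ))
      obtain ⟨m, hm⟩ := hi α (hΨΦ hα) β (hΨΦ hβ)
      unfold reflRoot
      rw [hm, Int.cast_smul_eq_zsmul]
      exact sub_mem (hΨcl β hβ) (zsmul_mem (hΨcl α hα) m)
    · intro α hα β hβ h
      exact key2 _ (add_mem (hΨcl α hα) (hΨcl β hβ)) h
  refine ⟨⟨hcl, ?_⟩, ?_⟩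
  · rintro C hC hΔC x (hx | ⟨hx, α, ⟨hα, -⟩, β, ⟨hβ, -⟩, rfl⟩)
    · exact hΔC hx
    · exact hC.2 α (hΔC hα) β (hΔC hβ) (hlΦ hx)
  · have hss : Δ ⊂ Ψ := by
      refine ⟨Set.subset_union_left, fun h => hnc ?_⟩
      intro x hx y hy hxy
      exact h (step1 x hx y hy hxy)
    have hEq : Ψ = Φ := by
      by_contra h
      exact hmax Ψ hcl h hss
    intro x hx
    have hxΦ : x ∈ Ψ := by rw [hEq]; rw [hΦs] at hx; exact hx.1
    rcases hxΦ with h | ⟨h, -⟩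
    · exact h
    · rw [hΦl] at h; exact absurd hx h.2

end BdS
end
end
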